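/- Let f be continuous on [0,1] with modulus of uniform continuity ω_f, let n ≥ 1, set ζ = ε/(4(n+1)·20ⁿ·(n+2)^{2n}·nⁿ) and Φ(ε) = (ζ/2)·min{1/(10(n+2)²), ω_f(ζ/12), ζ/(24n²(n+1)²‖f‖₁)}. Then Φ is a modulus of uniqueness for best L¹-approximation of f by polynomials in 𝒬ₙ: if p₁, p₂ ∈ 𝒬ₙ are Φ(ε)-nearly best approximations to f in 𝒬ₙ, then ‖p₁−p₂‖₁ < ε. -/

import Mathlib

open MeasureTheory Metric Polynomial Set

/-!
Let `m` be the midpoint of two nearly best approximations `p₁`, `p₂` and `d = (p₁ - p₂) / 2`. Since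
`|x - y| + |x + y| = 2 max(|x|, |y|)`, the average of `|f - p₁|` and `|f - p₂|` is
`max(|f - m|, |d|)`, so near-optimality makes `∫ (max(|f - m|, |d|) - |f - m|)` small. The `L¹`
bound on `p₁`, `p₂` makes `m` and `d` Lipschitz by Markov's inequality, and together with the
modulus of `f` this upgrades to `|d| ≤ |f - m| + small` at every point. If `|f - m|` were large
away from the real parts of the roots of `p₁ - p₂`, a polynomial with matching signs would improve
on `m`; hence `|f - m|`, and with it `d`, is small at some point away from these roots. The value of
a polynomial at such a point controls the polynomial on the whole interval.
-/

section PolynomialInequalities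

variable {p : ℝ[X]} {n : ℕ} {a b u x y M : ℝ}

lemma eq_zero_of_forall_Icc_eval_eq_zero (hab : a < b) (h : ∀ x ∈ Icc a b, p.eval x = 0) :
    p = 0 :=
  eq_zero_of_infinite_isRoot p <| (Icc_infinite hab).mono h

lemma integral_abs_eval_pos (hab : a < b) (hp : p ≠ 0) : 0 < ∫ x in a..b, |p.eval x| := by
  refine intervalIntegral.integral_pos hab p.continuous.abs.continuousOn
    (fun x _ ↦ abs_nonneg _) ?_
  by_contra! h
  exact hp <| eq_zero_of_forall_Icc_eval_eq_zero hab fun x hx ↦ abs_nonpos_iff.1 (h x hx)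

lemma abs_eval_one_derivative_le (hp : p.natDegree ≤ n)
    (hM : ∀ y ∈ Icc (-1 : ℝ) 1, |p.eval y| ≤ M) :
    |(derivative p).eval 1| ≤ n ^ 2 * M := by
  rcases ((abs_nonneg _).trans (hM 1 (by simp))).eq_or_lt with rfl | hM0
  · have hp0 : p = 0 := eq_zero_of_forall_Icc_eval_eq_zero (by norm_num : (-1 : ℝ) < 1)
      fun x hx ↦ abs_nonpos_iff.1 (hM x hx)
    simp [hp0]
  have upper (c : ℝ) (hc : |c| = M⁻¹) : c * (derivative p).eval 1 ≤ n ^ 2 := by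
    have hdeg : (C c * p).degree ≤ n :=
      degree_le_of_natDegree_le ((natDegree_C_mul_le c p).trans hp)
    have hbound (y : ℝ) (hy : y ∈ Icc (-1) 1) : |(C c * p).eval y| ≤ 1 := by
      rw [eval_mul, eval_C, abs_mul, hc, inv_mul_le_one₀ hM0]
      exact hM y hy
    simpa [Chebyshev.derivative_T_eval_one] using
      Chebyshev.eval_iterate_derivative_le_of_forall_abs_le_one (k := 1) le_rfl hdeg hbound
  have hpos := upper M⁻¹ (abs_of_pos (inv_pos.2 hM0))
  have hneg := upper (-M⁻¹) (by rw [abs_neg, abs_of_pos (inv_pos.2 hM0)])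
  rw [inv_mul_le_iff₀ hM0] at hpos
  rw [neg_mul, ← mul_neg, inv_mul_le_iff₀ hM0] at hneg
  rw [abs_le']
  constructor <;> linarith

lemma abs_sub_mul_abs_eval_derivative_le (hp : p.natDegree ≤ n)
    (hM : ∀ y ∈ uIcc u x, |p.eval y| ≤ M) :
    |x - u| * |(derivative p).eval x| ≤ 2 * n ^ 2 * M := by
  set ℓ : ℝ[X] := C ((x - u) / 2) * X + C ((x + u) / 2) with hℓ
  have hdeg : (p.comp ℓ).natDegree ≤ n := by
    grw [natDegree_comp_le, natDegree_linear_le, mul_one, hp]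
  have hbound (y : ℝ) (hy : y ∈ Icc (-1) 1) : |(p.comp ℓ).eval y| ≤ M := by
    rw [eval_comp]
    refine hM _ ?_
    have hseg : ℓ.eval y = u + ((y + 1) / 2) • (x - u) := by
      simp only [hℓ, eval_add, eval_mul, eval_C, eval_X, smul_eq_mul]
      ring
    rw [hseg, ← segment_eq_uIcc]
    exact (convex_segment u x).add_smul_sub_mem (left_mem_segment ℝ u x)
      (right_mem_segment ℝ u x) ⟨by linarith [hy.1], by linarith [hy.2]⟩
  have hℓ1 : ℓ.eval 1 = x := by
    simp only [hℓ, eval_add, eval_mul, eval_C, eval_X]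
    ring
  have hendpoint := abs_eval_one_derivative_le hdeg hbound
  rw [derivative_comp, eval_mul, eval_comp, hℓ1, abs_mul] at hendpoint
  have hslope : (derivative ℓ).eval 1 = (x - u) / 2 := by simp [hℓ]
  rw [hslope, abs_div, abs_two] at hendpoint
  linarith

lemma abs_eval_derivative_le (hab : a < b) (hp : p.natDegree ≤ n)
    (hM : ∀ y ∈ Icc a b, |p.eval y| ≤ M) (hx : x ∈ Icc a b) :
    |(derivative p).eval x| ≤ 4 * n ^ 2 / (b - a) * M := by
  obtain ⟨u, hu, hfar⟩ : ∃ u ∈ Icc a b, (b - a) / 2 ≤ |x - u| := by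
    rcases le_total x ((a + b) / 2) with h | h
    · exact ⟨b, right_mem_Icc.2 hab.le, by rw [abs_sub_comm]; exact le_abs.2 (.inl (by linarith))⟩
    · exact ⟨a, left_mem_Icc.2 hab.le, le_abs.2 (.inl (by linarith))⟩
  have hle := abs_sub_mul_abs_eval_derivative_le hp fun y hy ↦
    hM y (uIcc_subset_Icc hu hx hy)
  have hmono := mul_le_mul_of_nonneg_right hfar (abs_nonneg ((derivative p).eval x))
  rw [div_mul_eq_mul_div, le_div_iff₀ (sub_pos.2 hab)]
  linarith

lemma exists_natDegree_le_derivative_eq {K : Type*} [Field K] [CharZero K] (p : K[X]) :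
    ∃ F : K[X], F.natDegree ≤ p.natDegree + 1 ∧ derivative F = p := by
  refine ⟨∑ i ∈ Finset.range (p.natDegree + 1), monomial (i + 1) (p.coeff i / (i + 1)), ?_, ?_⟩
  · refine natDegree_sum_le_of_forall_le _ _ fun i hi ↦ (natDegree_monomial_le _).trans ?_
    exact Finset.mem_range.1 hi
  · conv_rhs => rw [p.as_sum_range]
    rw [derivative_sum]
    refine Finset.sum_congr rfl fun i _ ↦ ?_
    rw [derivative_monomial, Nat.cast_succ, div_mul_cancel₀ _ (Nat.cast_add_one_ne_zero i),
      Nat.add_sub_cancel]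

lemma abs_eval_le_integral_abs (hab : a < b) (hp : p.natDegree ≤ n) (hx : x ∈ Icc a b) :
    |p.eval x| ≤ 2 * (n + 1) ^ 2 / (b - a) * ∫ t in a..b, |p.eval t| := by
  obtain ⟨F, hF, rfl⟩ := exists_natDegree_le_derivative_eq p
  -- Centring the primitive halves its sup norm, so that Markov's factor `4` becomes a `2`.
  set G : ℝ[X] := C 2 * F - C (F.eval a + F.eval b) with hG
  have hdeg : G.natDegree ≤ n + 1 := by
    refine (natDegree_sub_C ..).trans_le ((natDegree_C_mul_le 2 F).trans ?_)
    omega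
  have hincr (c d : ℝ) (hcd : c ≤ d) :
      |F.eval d - F.eval c| ≤ ∫ t in c..d, |(derivative F).eval t| := by
    rw [← intervalIntegral.integral_eq_sub_of_hasDerivAt (fun t _ ↦ F.hasDerivAt t)
      ((derivative F).continuous.intervalIntegrable c d)]
    exact intervalIntegral.abs_integral_le_integral_abs hcd
  have hbound (y : ℝ) (hy : y ∈ Icc a b) :
      |G.eval y| ≤ ∫ t in a..b, |(derivative F).eval t| := by
    have hint (c d : ℝ) : IntervalIntegrable (fun t ↦ |(derivative F).eval t|) volume c d :=
      (derivative F).continuous.abs.intervalIntegrable c d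
    calc |G.eval y| = |(F.eval y - F.eval a) - (F.eval b - F.eval y)| := by
          congr 1
          simp only [hG, eval_sub, eval_mul, eval_C]
          ring
      _ ≤ |F.eval y - F.eval a| + |F.eval b - F.eval y| := abs_sub _ _
      _ ≤ (∫ t in a..y, |(derivative F).eval t|) + ∫ t in y..b, |(derivative F).eval t| :=
          add_le_add (hincr a y hy.1) (hincr y b hy.2)
      _ = _ := intervalIntegral.integral_add_adjacent_intervals (hint a y) (hint y b)
  have hmarkov := abs_eval_derivative_le hab hdeg hbound hx
  have hderiv : (derivative G).eval x = 2 * (derivative F).eval x := by simp [hG]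
  rw [hderiv, abs_mul, abs_two, Nat.cast_succ] at hmarkov
  linear_combination hmarkov / 2

lemma abs_eval_sub_eval_le (hab : a < b) (hp : p.natDegree ≤ n) (hx : x ∈ Icc a b)
    (hy : y ∈ Icc a b) :
    |p.eval y - p.eval x| ≤
      8 * n ^ 2 * (n + 1) ^ 2 / (b - a) ^ 2 * (∫ t in a..b, |p.eval t|) * |y - x| := by
  refine (convex_Icc a b).norm_image_sub_le_of_norm_deriv_le
    (fun z _ ↦ p.differentiableAt) (fun z hz ↦ ?_) hx hy
  rw [p.deriv, Real.norm_eq_abs]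
  refine (abs_eval_derivative_le hab hp (fun t ht ↦ abs_eval_le_integral_abs hab hp ht)
    hz).trans_eq ?_
  have := (sub_pos.2 hab).ne'
  field_simp
  ring

end PolynomialInequalities

section Roots

lemma norm_eval_eq_prod_roots {K : Type*} [NormedField K] {P : K[X]} (hP : P.Splits) (x : K) :
    ‖P.eval x‖ = ‖P.leadingCoeff‖ * (P.roots.map fun z ↦ ‖x - z‖).prod := by
  rw [hP.eval_eq_prod_roots, norm_mul]
  congr 1
  simpa [Multiset.map_map, Function.comp_def] using
    map_multiset_prod (normHom (α := K)) (P.roots.map (x - ·))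

lemma norm_eval_le_of_forall_roots_le_norm_sub {K : Type*} [NormedField K] {P : K[X]}
    (hP : P.Splits) {s : ℝ} (hs : 0 < s) {x : K} (hx : ∀ z ∈ P.roots, s ≤ ‖x - z‖) (y : K) :
    ‖P.eval y‖ ≤ (1 + ‖y - x‖ / s) ^ P.natDegree * ‖P.eval x‖ := by
  have hfactor (z : K) (hz : z ∈ P.roots) : ‖y - z‖ ≤ (1 + ‖y - x‖ / s) * ‖x - z‖ := by
    have hle := mul_le_mul_of_nonneg_left (hx z hz) (div_nonneg (norm_nonneg (y - x)) hs.le)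
    rw [div_mul_cancel₀ _ hs.ne'] at hle
    linarith [norm_sub_le_norm_sub_add_norm_sub y x z]
  have hprod := Multiset.prod_map_le_prod_map₀ _ _ (fun z _ ↦ norm_nonneg (y - z)) hfactor
  rw [Multiset.prod_map_mul, Multiset.map_const', Multiset.prod_replicate,
    ← hP.natDegree_eq_card_roots] at hprod
  rw [norm_eval_eq_prod_roots hP, norm_eval_eq_prod_roots hP, mul_left_comm]
  exact mul_le_mul_of_nonneg_left hprod (norm_nonneg _)

/-- The real parts of the complex roots of a real polynomial: the finitely many points of the
line near which the polynomial may be small. For the zero polynomial this is empty. -/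
noncomputable def rootRealParts (p : ℝ[X]) : Finset ℝ :=
  (p.aroots ℂ).toFinset.image Complex.re

lemma card_rootRealParts_le (p : ℝ[X]) : (rootRealParts p).card ≤ p.natDegree := by
  grw [rootRealParts, Finset.card_image_le, Multiset.toFinset_card_le, aroots_def, card_roots',
    natDegree_map_le]

lemma notMem_thickening_coe_finset {R : Finset ℝ} {s x : ℝ} :
    x ∉ thickening s (R : Set ℝ) ↔ ∀ r ∈ R, s ≤ |x - r| := by
  simp [mem_thickening_iff, Real.dist_eq]

lemma abs_eval_le_of_notMem_thickening_rootRealParts {p : ℝ[X]} {s x : ℝ} (hs : 0 < s)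
    (hx : x ∉ thickening s (rootRealParts p : Set ℝ)) (y : ℝ) :
    |p.eval y| ≤ (1 + |y - x| / s) ^ p.natDegree * |p.eval x| := by
  have heval (t : ℝ) : (p.map (algebraMap ℝ ℂ)).eval (t : ℂ) = (p.eval t : ℝ) := by
    rw [eval_map_algebraMap]
    exact aeval_algebraMap_apply_eq_algebraMap_eval t p
  have hroots (z : ℂ) (hz : z ∈ p.aroots ℂ) : s ≤ ‖(x : ℂ) - z‖ := by
    have hre : z.re ∈ rootRealParts p :=
      Finset.mem_image_of_mem _ (Multiset.mem_toFinset.2 hz)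
    refine (notMem_thickening_coe_finset.1 hx _ hre).trans ?_
    simpa using Complex.abs_re_le_norm ((x : ℂ) - z)
  have h := norm_eval_le_of_forall_roots_le_norm_sub (IsAlgClosed.splits _) hs hroots y
  rwa [heval, heval, ← Complex.ofReal_sub, Complex.norm_real, Complex.norm_real, Complex.norm_real,
    natDegree_map] at h

lemma integral_abs_eval_le_of_notMem_thickening_rootRealParts {p : ℝ[X]} {a b s x : ℝ}
    (hs : 0 < s) (hx : x ∈ Icc a b) (hxp : x ∉ thickening s (rootRealParts p : Set ℝ)) :
    ∫ t in a..b, |p.eval t| ≤ (b - a) * ((1 + (b - a) / s) ^ p.natDegree * |p.eval x|) := by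
  have hab : a ≤ b := hx.1.trans hx.2
  have hbound (t : ℝ) (ht : t ∈ Icc a b) :
      |p.eval t| ≤ (1 + (b - a) / s) ^ p.natDegree * |p.eval x| := by
    grw [abs_eval_le_of_notMem_thickening_rootRealParts hs hxp t, ← Real.dist_eq,
      Real.dist_le_of_mem_Icc ht hx]
  refine (intervalIntegral.integral_mono_on hab (p.continuous.abs.intervalIntegrable a b)
    intervalIntegrable_const hbound).trans_eq ?_
  rw [intervalIntegral.integral_const, smul_eq_mul]

end Roots

section SignPattern

lemma forall_pos_or_forall_neg_of_isPreconnected {X : Type*} [TopologicalSpace X] {S : Set X}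
    {g : X → ℝ} (hS : IsPreconnected S) (hg : ContinuousOn g S) (h0 : ∀ x ∈ S, g x ≠ 0) :
    (∀ x ∈ S, 0 < g x) ∨ ∀ x ∈ S, g x < 0 := by
  by_contra! h
  obtain ⟨⟨x, hx, hgx⟩, y, hy, hgy⟩ := h
  obtain ⟨z, hz, hgz⟩ := hS.intermediate_value hx hy hg ⟨hgx, hgy⟩
  exact h0 z hz hgz

lemma le_abs_sub_iff {s x m : ℝ} : s ≤ |x - m| ↔ x ≤ m - s ∨ m + s ≤ x := by
  rw [le_abs, neg_sub, le_sub_iff_add_le', or_comm, le_sub_comm]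

-- Induction on `R` from the right: beyond its largest point `m` the sign of `g` is constant, and
-- `m` is put into `T` exactly when that sign disagrees with the one predicted by `R \ {m}`.
lemma exists_subset_forall_mul_prod_sub_nonneg {s : ℝ} (hs : 0 ≤ s) (R : Finset ℝ) {g : ℝ → ℝ}
    {S : Set ℝ} (hS : S.OrdConnected) (hg : ContinuousOn g S)
    (h0 : ∀ x ∈ S \ thickening s R, g x ≠ 0) :
    ∃ T ⊆ R, ∃ η ≠ 0, ∀ x ∈ S \ thickening s R, 0 ≤ g x * (η * ∏ r ∈ T, (x - r)) := by
  simp only [mem_sdiff, notMem_thickening_coe_finset, and_imp] at h0 ⊢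
  induction R using Finset.induction_on_max generalizing S with
  | empty =>
    rcases forall_pos_or_forall_neg_of_isPreconnected hS.isPreconnected hg
      (fun x hx ↦ h0 x hx (by simp)) with hpos | hneg
    · exact ⟨∅, subset_rfl, 1, one_ne_zero, fun x hx _ ↦ by simpa using (hpos x hx).le⟩
    · exact ⟨∅, subset_rfl, -1, neg_ne_zero.2 one_ne_zero,
        fun x hx _ ↦ by simpa using (hneg x hx).le⟩
  | insert m R hm ih =>
    simp only [Finset.forall_mem_insert, and_imp] at h0 ⊢
    obtain ⟨T, hT, η, hη, hleft⟩ := ih (S := S ∩ Iic (m - s)) (hS.inter ordConnected_Iic)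
      (hg.mono inter_subset_left) fun x hx ↦ h0 x hx.1 (le_abs_sub_iff.2 (.inl hx.2))
    have hmT : m ∉ T := fun h ↦ (hm m (hT h)).false
    have hprod (x : ℝ) (hx : m + s ≤ x) : 0 ≤ ∏ r ∈ T, (x - r) :=
      Finset.prod_nonneg fun r hr ↦ by linarith [hm r (hT hr)]
    have hright (x : ℝ) (hx : x ∈ S ∩ Ici (m + s)) : η * g x ≠ 0 :=
      mul_ne_zero hη <| h0 x hx.1 (le_abs_sub_iff.2 (.inr hx.2)) fun r hr ↦
        le_abs_sub_iff.2 (.inr (by linarith [hm r hr, mem_Ici.1 hx.2]))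
    rcases forall_pos_or_forall_neg_of_isPreconnected (hS.inter ordConnected_Ici).isPreconnected
      ((hg.mono inter_subset_left).const_mul η) hright with hpos | hneg
    · refine ⟨T, hT.trans (Finset.subset_insert m R), η, hη, fun x hx hxm hxR ↦ ?_⟩
      rcases le_abs_sub_iff.1 hxm with hlt | hgt
      · exact hleft x ⟨hx, hlt⟩ hxR
      · linarith [mul_nonneg (hpos x ⟨hx, hgt⟩).le (hprod x hgt)]
    · refine ⟨insert m T, Finset.insert_subset_insert m hT, -η, neg_ne_zero.2 hη,
        fun x hx hxm hxR ↦ ?_⟩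
      rw [Finset.prod_insert hmT]
      rcases le_abs_sub_iff.1 hxm with hlt | hgt
      · linarith [mul_nonneg (hleft x ⟨hx, hlt⟩ hxR) (by linarith : 0 ≤ m - x)]
      · linarith [mul_nonneg (mul_nonneg (neg_nonneg.2 (hneg x ⟨hx, hgt⟩).le) (hprod x hgt))
          (by linarith : 0 ≤ x - m)]

lemma exists_polynomial_forall_mul_eval_nonneg {s : ℝ} (hs : 0 ≤ s) (R : Finset ℝ) {g : ℝ → ℝ}
    {S : Set ℝ} (hS : S.OrdConnected) (hg : ContinuousOn g S)
    (h0 : ∀ x ∈ S \ thickening s R, g x ≠ 0) :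
    ∃ q : ℝ[X], q ≠ 0 ∧ q.natDegree ≤ R.card ∧ ∀ x ∈ S \ thickening s R, 0 ≤ g x * q.eval x := by
  obtain ⟨T, hT, η, hη, h⟩ := exists_subset_forall_mul_prod_sub_nonneg hs R hS hg h0
  refine ⟨C η * ∏ r ∈ T, (X - C r), ?_, ?_, fun x hx ↦ ?_⟩
  · exact mul_ne_zero (C_ne_zero.2 hη) (Finset.prod_ne_zero_iff.2 fun r _ ↦ X_sub_C_ne_zero r)
  · grw [natDegree_C_mul_le, natDegree_finsetProd_X_sub_C_eq_card, Finset.card_le_card hT]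
  · simpa [eval_prod] using h x hx

end SignPattern

section Improvement

-- Where `q` has the sign of `g` and is smaller, `|g - q| = |g| - |q|`; elsewhere
-- `|g - q| ≤ |g| + |q|`.
lemma integral_abs_sub_le_of_mul_nonneg {Ω : Type*} [MeasurableSpace Ω] {μ : Measure Ω}
    {g q : Ω → ℝ} {E : Set Ω} (hg : Integrable g μ) (hq : Integrable q μ) (hE : MeasurableSet E)
    (h : ∀ᵐ x ∂μ, x ∉ E → 0 ≤ g x * q x ∧ |q x| ≤ |g x|) :
    ∫ x, |g x - q x| ∂μ ≤ ∫ x, |g x| ∂μ - ∫ x, |q x| ∂μ + 2 * ∫ x in E, |q x| ∂μ := by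
  have hqE : Integrable (E.indicator fun x ↦ 2 * |q x|) μ := (hq.abs.const_mul 2).indicator hE
  have hpointwise :
      ∀ᵐ x ∂μ, |g x - q x| ≤ |g x| - |q x| + E.indicator (fun x ↦ 2 * |q x|) x := by
    filter_upwards [h] with x hx
    by_cases hxE : x ∈ E
    · rw [indicator_of_mem hxE]
      linarith [abs_sub (g x) (q x)]
    · obtain ⟨hsign, hle⟩ := hx hxE
      rw [indicator_of_notMem hxE, add_zero, ← abs_of_nonneg (sub_nonneg.2 hle)]
      refine sq_le_sq.1 ?_
      have hcross : |g x| * |q x| = g x * q x := by rw [← abs_mul, abs_of_nonneg hsign]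
      linarith [sq_abs (g x), sq_abs (q x), sub_sq (g x) (q x), sub_sq |g x| |q x|]
  refine (integral_mono_ae (hg.sub hq).abs ((hg.abs.sub hq.abs).add hqE) hpointwise).trans_eq ?_
  rw [integral_add' (hg.abs.sub hq.abs) hqE, integral_sub' hg.abs hq.abs, integral_indicator hE,
    integral_const_mul]

lemma volume_real_thickening_coe_finset_le (R : Finset ℝ) {s : ℝ} (hs : 0 ≤ s) :
    volume.real (thickening s (R : Set ℝ)) ≤ R.card * (2 * s) := by
  rw [thickening_eq_biUnion_ball]
  refine (measureReal_biUnion_finset_le R fun r ↦ ball r s).trans_eq ?_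
  simp [Real.volume_real_ball hs]

lemma setIntegral_abs_thickening_coe_finset_le (R : Finset ℝ) {s ζ : ℝ} (hs : 0 ≤ s)
    (hζ : 0 ≤ ζ) {h : ℝ → ℝ} {A : Set ℝ} (hA : MeasurableSet A) (hh : ∀ x ∈ A, |h x| ≤ ζ) :
    ∫ x in thickening s (R : Set ℝ), |h x| ∂volume.restrict A ≤ ζ * (R.card * (2 * s)) := by
  have hbound : ∀ᵐ x ∂(volume.restrict A).restrict (thickening s R), ‖|h x|‖ ≤ ζ :=
    ae_restrict_of_ae <| (ae_restrict_mem hA).mono fun x hx ↦ by simpa using hh x hx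
  have hfin : volume (thickening s (R : Set ℝ)) < ⊤ :=
    R.finite_toSet.isBounded.thickening.measure_lt_top
  have hle := norm_setIntegral_le_of_norm_le_const_ae
    ((Measure.restrict_apply_le A _).trans_lt hfin) hbound
  rw [Real.norm_of_nonneg (integral_nonneg fun x ↦ abs_nonneg _),
    measureReal_restrict_apply isOpen_thickening.measurableSet] at hle
  grw [hle, measureReal_mono inter_subset_left hfin.ne, volume_real_thickening_coe_finset_le R hs]

lemma exists_smul_eval_le_of_ne_zero {p : ℝ[X]} {n : ℕ} {a b ζ : ℝ} (hab : a < b)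
    (hn : p.natDegree ≤ n) (hp : p ≠ 0) (hζ : 0 < ζ) :
    ∃ c : ℝ, 0 < c ∧ (∀ x ∈ Icc a b, |(c • p).eval x| ≤ ζ) ∧
      ∫ x in a..b, |(c • p).eval x| = ζ * (b - a) / (2 * (n + 1) ^ 2) := by
  have hI := integral_abs_eval_pos hab hp
  have hba := sub_pos.2 hab
  have hc : 0 < ζ * (b - a) / (2 * (n + 1) ^ 2 * ∫ x in a..b, |p.eval x|) := by positivity
  refine ⟨_, hc, fun x hx ↦ ?_, ?_⟩ <;>
    simp only [eval_smul, smul_eq_mul, abs_mul, abs_of_pos hc]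
  · grw [abs_eval_le_integral_abs hab hn hx]
    refine le_of_eq ?_
    field_simp
  · rw [intervalIntegral.integral_const_mul]
    field_simp

-- Off the `s`-thickening of `R` a polynomial of degree at most `n` can match the signs of `g`;
-- the thickening is so small that a quarter of the `L¹` norm of that polynomial is all it can
-- carry there.
lemma exists_polynomial_integral_abs_sub_le {g : ℝ → ℝ} {n : ℕ} {a b s ζ : ℝ} {R : Finset ℝ}
    (hab : a < b) (hg : ContinuousOn g (Icc a b)) (hR : R.card ≤ n) (hs : 0 ≤ s)
    (hsn : 16 * n * s * (n + 1) ^ 2 ≤ b - a) (hζ : 0 < ζ)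
    (hbig : ∀ x ∈ Icc a b \ thickening s R, ζ ≤ |g x|) :
    ∃ q : ℝ[X], q.natDegree ≤ n ∧
      ∫ x in a..b, |g x - q.eval x| ≤
        (∫ x in a..b, |g x|) - ζ * (b - a) / (4 * (n + 1) ^ 2) := by
  obtain ⟨q₀, hq₀, hdeg, hsign⟩ := exists_polynomial_forall_mul_eval_nonneg hs R
    ordConnected_Icc hg fun x hx ↦ abs_pos.1 (hζ.trans_le (hbig x hx))
  obtain ⟨c, hc, hsup, hint⟩ := exists_smul_eval_le_of_ne_zero hab (hdeg.trans hR) hq₀ hζ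
  set q := c • q₀ with hq
  refine ⟨q, (natDegree_smul_le c q₀).trans (hdeg.trans hR), ?_⟩
  set μ := volume.restrict (Ioc a b)
  set E := thickening s (R : Set ℝ)
  have hmem : ∀ᵐ x ∂μ, x ∈ Icc a b :=
    (ae_restrict_mem measurableSet_Ioc).mono fun x hx ↦ Ioc_subset_Icc_self hx
  have hE : ∫ x in E, |q.eval x| ∂μ ≤ ζ * (b - a) / (8 * (n + 1) ^ 2) := by
    grw [setIntegral_abs_thickening_coe_finset_le R hs hζ.le measurableSet_Ioc
      fun x hx ↦ hsup x (Ioc_subset_Icc_self hx), hR]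
    rw [le_div_iff₀ (by positivity)]
    linear_combination ζ * hsn
  have hkey := integral_abs_sub_le_of_mul_nonneg (μ := μ) (g := g) (q := fun x ↦ q.eval x) (E := E)
    (hg.integrableOn_Icc.mono_set Ioc_subset_Icc_self)
    (q.continuous.integrableOn_Icc.mono_set Ioc_subset_Icc_self) isOpen_thickening.measurableSet
    (hmem.mono fun x hx hxE ↦ ⟨?_, (hsup x hx).trans (hbig x ⟨hx, hxE⟩)⟩)
  · rw [← intervalIntegral.integral_of_le hab.le, ← intervalIntegral.integral_of_le hab.le,
      ← intervalIntegral.integral_of_le hab.le, hint] at hkey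
    refine hkey.trans ?_
    grw [hE]
    refine le_of_eq ?_
    field_simp
    ring
  · rw [hq, eval_smul, smul_eq_mul, mul_left_comm]
    exact mul_nonneg hc.le (hsign x ⟨hx, hxE⟩)

end Improvement

section Gap

variable {a b c e k x δ : ℝ}

lemma exists_abs_sub_lt_and_lt_of_integral_lt {g : ℝ → ℝ}
    (hg : IntervalIntegrable g volume a b) (hg0 : ∀ y ∈ Icc a b, 0 ≤ g y) (hδ : 0 < δ)
    (hδab : 2 * δ ≤ b - a) (hlt : ∫ y in a..b, g y < c * δ) (hx : x ∈ Icc a b) :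
    ∃ y ∈ Icc a b, |y - x| < δ ∧ g y < c := by
  by_contra! hge
  obtain ⟨u, hau, hub, hu⟩ :
      ∃ u, a ≤ u ∧ u + δ ≤ b ∧ ∀ y ∈ Ioo u (u + δ), |y - x| < δ := by
    rcases le_total x ((a + b) / 2) with h | h
    · exact ⟨x, hx.1, by linarith, fun y hy ↦ abs_lt.2 (by constructor <;> linarith [hy.1, hy.2])⟩
    · exact ⟨x - δ, by linarith, by linarith [hx.2],
        fun y hy ↦ abs_lt.2 (by constructor <;> linarith [hy.1, hy.2])⟩
  have hle : u ≤ u + δ := by linarith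
  have hsub : Icc u (u + δ) ⊆ Icc a b := Icc_subset_Icc hau hub
  have hlower : ∫ _ in u..(u + δ), c ≤ ∫ y in u..(u + δ), g y :=
    intervalIntegral.integral_mono_on_of_le_Ioo hle intervalIntegrable_const
      (hg.mono_set (by rwa [uIcc_of_le hle, uIcc_of_le (by linarith)]))
      fun y hy ↦ hge y (hsub (Ioo_subset_Icc_self hy)) (hu y hy)
  have hupper : ∫ y in u..(u + δ), g y ≤ ∫ y in a..b, g y :=
    intervalIntegral.integral_mono_interval hau hle hub
      ((ae_restrict_mem measurableSet_Ioc).mono fun y hy ↦ hg0 y (Ioc_subset_Icc_self hy)) hg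
  rw [intervalIntegral.integral_const, smul_eq_mul, add_sub_cancel_left] at hlower
  linarith

lemma abs_le_abs_add_of_integral_max_sub_lt {h d : ℝ → ℝ} (hh : ContinuousOn h (Icc a b))
    (hd : ContinuousOn d (Icc a b)) (hδ : 0 < δ) (hδab : 2 * δ ≤ b - a)
    (hlt : ∫ y in a..b, (max |h y| |d y| - |h y|) < c * δ) (hx : x ∈ Icc a b)
    (he : ∀ y ∈ Icc a b, |y - x| < δ → |h y - h x| ≤ e)
    (hk : ∀ y ∈ Icc a b, |y - x| < δ → |d y - d x| ≤ k) :
    |d x| ≤ |h x| + c + e + k := by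
  have hcont : ContinuousOn (fun y ↦ max |h y| |d y| - |h y|) (Icc a b) :=
    (hh.abs.sup hd.abs).sub hh.abs
  obtain ⟨y, hy, hyx, hgap⟩ := exists_abs_sub_lt_and_lt_of_integral_lt
    (hcont.intervalIntegrable_of_Icc (by linarith))
    (fun y _ ↦ sub_nonneg.2 (le_max_left _ _)) hδ hδab hlt hx
  have hdx := abs_sub_abs_le_abs_sub (d x) (d y)
  have hhy := abs_sub_abs_le_abs_sub (h y) (h x)
  rw [abs_sub_comm] at hdx
  linarith [he y hy hyx, hk y hy hyx, le_max_right |h y| |d y|]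

lemma abs_sub_add_abs_add_eq_two_mul_max (x y : ℝ) : |x - y| + |x + y| = 2 * max |x| |y| := by
  grind

end Gap

section NearlyBest

/-- `p` is a `δ`-nearly best approximation to `f` in `Q` with respect to the `L¹` norm on
`[a, b]`. Membership of `p` in `Q` is not part of the definition. -/
def IsNearlyBest (a b : ℝ) (f : ℝ → ℝ) (Q : Set ℝ[X]) (δ : ℝ) (p : ℝ[X]) : Prop :=
  ∀ q ∈ Q, ∫ x in a..b, |f x - p.eval x| < (∫ x in a..b, |f x - q.eval x|) + δ

/-- The polynomials of degree at most `n` whose `L¹` norm on `[a, b]` is at most `B`. -/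
def l1Ball (a b : ℝ) (n : ℕ) (B : ℝ) : Set ℝ[X] :=
  {q | q.natDegree ≤ n ∧ ∫ x in a..b, |q.eval x| ≤ B}

variable {f : ℝ → ℝ} {Q : Set ℝ[X]} {p p₁ p₂ : ℝ[X]} {n : ℕ} {a b c e x y B δ : ℝ}

lemma convex_l1Ball (hab : a ≤ b) : Convex ℝ (l1Ball a b n B) := by
  rintro p ⟨hp, hpB⟩ q ⟨hq, hqB⟩ s t hs ht hst
  refine ⟨natDegree_add_le_of_degree_le ((natDegree_smul_le s p).trans hp)
    ((natDegree_smul_le t q).trans hq), ?_⟩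
  have hint (r : ℝ[X]) (u : ℝ) : IntervalIntegrable (fun x ↦ u * |r.eval x|) volume a b :=
    (continuous_const.mul r.continuous.abs).intervalIntegrable a b
  calc ∫ x in a..b, |(s • p + t • q).eval x|
      ≤ ∫ x in a..b, (s * |p.eval x| + t * |q.eval x|) := by
        refine intervalIntegral.integral_mono_on hab
          ((s • p + t • q).continuous.abs.intervalIntegrable a b) ((hint p s).add (hint q t))
          fun x _ ↦ ?_
        grw [eval_add, abs_add_le]
        simp [abs_mul, abs_of_nonneg, hs, ht]
    _ = s * (∫ x in a..b, |p.eval x|) + t * ∫ x in a..b, |q.eval x| := by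
        rw [intervalIntegral.integral_add (hint p s) (hint q t),
          intervalIntegral.integral_const_mul, intervalIntegral.integral_const_mul]
    _ ≤ s * B + t * B := by gcongr
    _ = B := by rw [← add_mul, hst, one_mul]

lemma neg_mem_l1Ball (hp : p ∈ l1Ball a b n B) : -p ∈ l1Ball a b n B := by
  simpa [l1Ball] using hp

lemma abs_eval_sub_eval_le_of_mem_l1Ball (hab : a < b) (hp : p ∈ l1Ball a b n B)
    (hx : x ∈ Icc a b) (hy : y ∈ Icc a b) (hxy : |y - x| ≤ δ) :
    |p.eval y - p.eval x| ≤ 8 * n ^ 2 * (n + 1) ^ 2 / (b - a) ^ 2 * B * δ := by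
  have hB : 0 ≤ B :=
    (intervalIntegral.integral_nonneg hab.le fun x _ ↦ abs_nonneg _).trans hp.2
  grw [abs_eval_sub_eval_le hab hp.1 hx hy, hp.2, hxy]

lemma eval_midpoint (p q : ℝ[X]) (x : ℝ) :
    (midpoint ℝ p q).eval x = (p.eval x + q.eval x) / 2 := by
  rw [midpoint_eq_smul_add, eval_smul, eval_add, invOf_eq_inv, smul_eq_mul, inv_mul_eq_div]

lemma intervalIntegrable_abs_sub_eval (hab : a ≤ b) (hf : ContinuousOn f (Icc a b)) (p : ℝ[X]) :
    IntervalIntegrable (fun x ↦ |f x - p.eval x|) volume a b :=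
  (hf.sub p.continuousOn).abs.intervalIntegrable_of_Icc hab

lemma IsNearlyBest.midpoint (hab : a ≤ b) (hf : ContinuousOn f (Icc a b))
    (h₁ : IsNearlyBest a b f Q δ p₁) (h₂ : IsNearlyBest a b f Q δ p₂) :
    IsNearlyBest a b f Q δ (midpoint ℝ p₁ p₂) := by
  intro q hq
  have hint := intervalIntegrable_abs_sub_eval hab hf
  have hle : ∫ x in a..b, |f x - (_root_.midpoint ℝ p₁ p₂).eval x| ≤
      ∫ x in a..b, (|f x - p₁.eval x| + |f x - p₂.eval x|) / 2 := by
    refine intervalIntegral.integral_mono_on hab (hint _)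
      (((hint p₁).add (hint p₂)).div_const 2) fun x _ ↦ ?_
    have hmean : f x - (p₁.eval x + p₂.eval x) / 2 =
        ((f x - p₁.eval x) + (f x - p₂.eval x)) / 2 := by ring
    grw [eval_midpoint, hmean, abs_div, abs_two, abs_add_le]
  rw [intervalIntegral.integral_div, intervalIntegral.integral_add (hint p₁) (hint p₂)] at hle
  linarith [h₁ q hq, h₂ q hq]

lemma IsNearlyBest.of_l1Ball (hab : a ≤ b) (hf : ContinuousOn f (Icc a b))
    (h : IsNearlyBest a b f (l1Ball a b n (2 * ∫ x in a..b, |f x|)) δ p) :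
    IsNearlyBest a b f {q | q.natDegree ≤ n} δ p := by
  intro q hq
  rcases le_or_gt (∫ x in a..b, |q.eval x|) (2 * ∫ x in a..b, |f x|) with hle | hgt
  · exact h q ⟨hq, hle⟩
  have hf' : IntervalIntegrable (fun x ↦ |f x|) volume a b :=
    hf.abs.intervalIntegrable_of_Icc hab
  have hfq := intervalIntegrable_abs_sub_eval hab hf q
  have hnonneg : 0 ≤ ∫ x in a..b, |f x| :=
    intervalIntegral.integral_nonneg hab fun x _ ↦ abs_nonneg _
  have htri : ∫ x in a..b, |q.eval x| ≤ ∫ x in a..b, (|f x| + |f x - q.eval x|) :=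
    intervalIntegral.integral_mono_on hab (q.continuous.abs.intervalIntegrable a b)
      (hf'.add hfq) fun x _ ↦ by simpa using abs_sub (f x) (f x - q.eval x)
  rw [intervalIntegral.integral_add hf' hfq] at htri
  have hzero := h 0 ⟨by simp, by simpa using hnonneg⟩
  simp only [eval_zero, sub_zero] at hzero
  linarith

lemma integral_max_sub_lt_of_isNearlyBest (hab : a ≤ b) (hf : ContinuousOn f (Icc a b))
    (hm : midpoint ℝ p₁ p₂ ∈ Q) (h₁ : IsNearlyBest a b f Q δ p₁)
    (h₂ : IsNearlyBest a b f Q δ p₂) :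
    ∫ x in a..b, (max |f x - (midpoint ℝ p₁ p₂).eval x| |(p₁.eval x - p₂.eval x) / 2| -
      |f x - (midpoint ℝ p₁ p₂).eval x|) < δ := by
  have hint := intervalIntegrable_abs_sub_eval hab hf
  have hmax (x : ℝ) : max |f x - (midpoint ℝ p₁ p₂).eval x| |(p₁.eval x - p₂.eval x) / 2| =
      (|f x - p₁.eval x| + |f x - p₂.eval x|) / 2 := by
    rw [eq_div_iff two_ne_zero, mul_comm, ← abs_sub_add_abs_add_eq_two_mul_max, eval_midpoint]
    congr 2 <;> ring
  simp only [hmax]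
  rw [intervalIntegral.integral_sub (((hint p₁).add (hint p₂)).div_const 2) (hint _),
    intervalIntegral.integral_div, intervalIntegral.integral_add (hint p₁) (hint p₂)]
  linarith [h₁ _ hm, h₂ _ hm]

lemma abs_sub_le_of_isNearlyBest (hab : a < b) (hf : ContinuousOn f (Icc a b))
    (hp₁ : p₁ ∈ l1Ball a b n B) (hp₂ : p₂ ∈ l1Ball a b n B)
    (h₁ : IsNearlyBest a b f (l1Ball a b n B) (c * δ) p₁)
    (h₂ : IsNearlyBest a b f (l1Ball a b n B) (c * δ) p₂) (hδ : 0 < δ) (hδab : 2 * δ ≤ b - a)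
    (hosc : ∀ x ∈ Icc a b, ∀ y ∈ Icc a b, |x - y| < δ → |f x - f y| ≤ e) (hx : x ∈ Icc a b) :
    |p₁.eval x - p₂.eval x| / 2 ≤ |f x - (midpoint ℝ p₁ p₂).eval x| + c + e +
      16 * n ^ 2 * (n + 1) ^ 2 / (b - a) ^ 2 * B * δ := by
  have hm : midpoint ℝ p₁ p₂ ∈ l1Ball a b n B := (convex_l1Ball hab.le).midpoint_mem hp₁ hp₂
  have hd : midpoint ℝ p₁ (-p₂) ∈ l1Ball a b n B :=
    (convex_l1Ball hab.le).midpoint_mem hp₁ (neg_mem_l1Ball hp₂)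
  have hdx (y : ℝ) : (midpoint ℝ p₁ (-p₂)).eval y = (p₁.eval y - p₂.eval y) / 2 := by
    rw [eval_midpoint, eval_neg, sub_eq_add_neg]
  have hgap := integral_max_sub_lt_of_isNearlyBest hab.le hf hm h₁ h₂
  simp only [← hdx] at hgap
  set m := midpoint ℝ p₁ p₂
  set d := midpoint ℝ p₁ (-p₂)
  have hle := abs_le_abs_add_of_integral_max_sub_lt (h := fun y ↦ f y - m.eval y)
    (hf.sub m.continuousOn) d.continuousOn hδ hδab hgap hx
    (e := e + 8 * n ^ 2 * (n + 1) ^ 2 / (b - a) ^ 2 * B * δ) (fun y hy hyx ↦ ?_)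
    fun y hy hyx ↦ abs_eval_sub_eval_le_of_mem_l1Ball hab hd hx hy hyx.le
  · rw [hdx, abs_div, abs_two] at hle
    linear_combination hle
  · have hsplit := abs_sub (f y - f x) (m.eval y - m.eval x)
    rw [sub_sub_sub_comm] at hsplit
    linarith [hosc y hy x hx hyx, abs_eval_sub_eval_le_of_mem_l1Ball hab hm hx hy hyx.le]

lemma exists_abs_sub_eval_lt_of_isNearlyBest {s ζ : ℝ} {R : Finset ℝ} (hab : a < b)
    (hf : ContinuousOn f (Icc a b)) (hp : p.natDegree ≤ n)
    (h : IsNearlyBest a b f {q | q.natDegree ≤ n} δ p) (hδ : δ ≤ ζ * (b - a) / (4 * (n + 1) ^ 2))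
    (hR : R.card ≤ n) (hs : 0 ≤ s) (hsn : 16 * n * s * (n + 1) ^ 2 ≤ b - a) (hζ : 0 < ζ) :
    ∃ x ∈ Icc a b \ thickening s R, |f x - p.eval x| < ζ := by
  by_contra! hbig
  obtain ⟨q, hq, himproved⟩ := exists_polynomial_integral_abs_sub_le hab
    (g := fun x ↦ f x - p.eval x) (hf.sub p.continuousOn) hR hs hsn hζ hbig
  have hnear := h (p + q) (natDegree_add_le_of_degree_le hp hq)
  simp only [eval_add, ← sub_sub] at hnear
  linarith

lemma integral_abs_sub_lt_of_isNearlyBest {ζ : ℝ} (hab : a < b) (hf : ContinuousOn f (Icc a b))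
    (hp₁ : p₁ ∈ l1Ball a b n (2 * ∫ x in a..b, |f x|))
    (hp₂ : p₂ ∈ l1Ball a b n (2 * ∫ x in a..b, |f x|))
    (h₁ : IsNearlyBest a b f (l1Ball a b n (2 * ∫ x in a..b, |f x|)) (c * δ) p₁)
    (h₂ : IsNearlyBest a b f (l1Ball a b n (2 * ∫ x in a..b, |f x|)) (c * δ) p₂)
    (hδ : 0 < δ) (hδab : 2 * δ ≤ b - a)
    (hosc : ∀ x ∈ Icc a b, ∀ y ∈ Icc a b, |x - y| < δ → |f x - f y| ≤ e) (hζ : 0 < ζ)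
    (hcδ : c * δ ≤ ζ * (b - a) / (4 * (n + 1) ^ 2)) :
    ∫ x in a..b, |p₁.eval x - p₂.eval x| < 2 * (b - a) * (16 * n * (n + 1) ^ 2 + 2) ^ n *
      (ζ + c + e + 32 * n ^ 2 * (n + 1) ^ 2 / (b - a) ^ 2 * (∫ x in a..b, |f x|) * δ) := by
  have hba := sub_pos.2 hab
  have hdeg : (p₁ - p₂).natDegree ≤ n :=
    (natDegree_sub_le_of_le hp₁.1 hp₂.1).trans_eq (max_self n)
  obtain ⟨x, ⟨hx, hxR⟩, hlt⟩ := exists_abs_sub_eval_lt_of_isNearlyBest hab hf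
    ((convex_l1Ball hab.le).midpoint_mem hp₁ hp₂).1 ((h₁.midpoint hab.le hf h₂).of_l1Ball hab.le hf)
    hcδ ((card_rootRealParts_le (p₁ - p₂)).trans hdeg)
    (s := (b - a) / (16 * n * (n + 1) ^ 2 + 1)) (by positivity) (by
      rw [← mul_div_assoc, div_mul_eq_mul_div, div_le_iff₀ (by positivity)]
      linarith) hζ
  have hbound := abs_sub_le_of_isNearlyBest hab hf hp₁ hp₂ h₁ h₂ hδ hδab hosc hx
  have hint := integral_abs_eval_le_of_notMem_thickening_rootRealParts (by positivity) hx hxR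
  simp only [eval_sub] at hint
  rw [div_div_cancel₀ hba.ne'] at hint
  have hbase : (1 : ℝ) ≤ 1 + (16 * n * (n + 1) ^ 2 + 1) := le_add_of_nonneg_right (by positivity)
  calc ∫ t in a..b, |p₁.eval t - p₂.eval t|
      ≤ (b - a) * ((1 + (16 * n * (n + 1) ^ 2 + 1)) ^ n * |p₁.eval x - p₂.eval x|) := by
        grw [hint, hdeg]
    _ = 2 * (b - a) * (16 * n * (n + 1) ^ 2 + 2) ^ n * (|p₁.eval x - p₂.eval x| / 2) := by
        ring
    _ < _ := by
        refine mul_lt_mul_of_pos_left ?_ (by positivity)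
        linear_combination hbound + hlt

end NearlyBest

lemma two_mul_pow_mul_le {n : ℕ} (hn : 1 ≤ n) {E ζ : ℝ} (hζ : 0 ≤ ζ) (hE : E ≤ 3 * ζ) :
    2 * (16 * n * (n + 1) ^ 2 + 2) ^ n * E ≤
      4 * (n + 1) * 20 ^ n * (n + 2) ^ (2 * n) * n ^ n * ζ := by
  have hn' : (1 : ℝ) ≤ n := Nat.one_le_cast.2 hn
  have hbase : (16 * n * (n + 1) ^ 2 + 2 : ℝ) ≤ 20 * (n + 2) ^ 2 * n := by nlinarith
  have hEn : E ≤ 2 * (n + 1) * ζ := hE.trans (by gcongr; linarith)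
  calc 2 * (16 * n * (n + 1) ^ 2 + 2) ^ n * E
      ≤ 2 * (16 * n * (n + 1) ^ 2 + 2) ^ n * (2 * (n + 1) * ζ) := by gcongr
    _ ≤ 2 * (20 * (n + 2) ^ 2 * n) ^ n * (2 * (n + 1) * ζ) := by gcongr
    _ = _ := by
        rw [mul_pow, mul_pow, ← pow_mul]
        ring

theorem stmt_11 (f : ℝ → ℝ) (n : ℕ) (hn : 1 ≤ n) (ωf : ℝ → ℝ) (ε : ℝ) (hε : 0 < ε)
    (hf : ContinuousOn f (Set.Icc 0 1))
    (hf1 : 0 < ∫ x in (0:ℝ)..1, |f x|)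
    (hωf : ∀ e : ℝ, 0 < e → ∀ x ∈ Set.Icc (0:ℝ) 1, ∀ y ∈ Set.Icc (0:ℝ) 1,
      |x - y| < ωf e → |f x - f y| < e)
    (p₁ p₂ : Polynomial ℝ) (hp₁ : p₁.natDegree ≤ n) (hp₂ : p₂.natDegree ≤ n)
    (hp₁Q : (∫ x in (0:ℝ)..1, |p₁.eval x|) ≤ 2 * ∫ x in (0:ℝ)..1, |f x|)
    (hp₂Q : (∫ x in (0:ℝ)..1, |p₂.eval x|) ≤ 2 * ∫ x in (0:ℝ)..1, |f x|)
    (ζ Φ : ℝ)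
    (hζ : ζ = ε / ((4:ℝ) * ((n:ℝ) + 1) * 20 ^ n * ((n:ℝ) + 2) ^ (2 * n) * (n:ℝ) ^ n))
    (hΦ : Φ = (ζ / 2) * min (min (1 / (10 * ((n:ℝ) + 2) ^ 2)) (ωf (ζ / 12)))
      (ζ / (24 * (n:ℝ) ^ 2 * ((n:ℝ) + 1) ^ 2 * ∫ x in (0:ℝ)..1, |f x|)))
    (hnear₁ : ∀ q : Polynomial ℝ, q.natDegree ≤ n →
      (∫ x in (0:ℝ)..1, |q.eval x|) ≤ 2 * (∫ x in (0:ℝ)..1, |f x|) →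
      (∫ x in (0:ℝ)..1, |f x - p₁.eval x|) < (∫ x in (0:ℝ)..1, |f x - q.eval x|) + Φ)
    (hnear₂ : ∀ q : Polynomial ℝ, q.natDegree ≤ n →
      (∫ x in (0:ℝ)..1, |q.eval x|) ≤ 2 * (∫ x in (0:ℝ)..1, |f x|) →
      (∫ x in (0:ℝ)..1, |f x - p₂.eval x|) < (∫ x in (0:ℝ)..1, |f x - q.eval x|) + Φ) :
    (∫ x in (0:ℝ)..1, |p₁.eval x - p₂.eval x|) < ε := by
  set N := ∫ x in (0:ℝ)..1, |f x|
  set δ := min (min (1 / (10 * ((n:ℝ) + 2) ^ 2)) (ωf (ζ / 12)))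
    (ζ / (24 * (n:ℝ) ^ 2 * ((n:ℝ) + 1) ^ 2 * N))
  have hζ0 : 0 < ζ := by rw [hζ]; positivity
  have hδ0 : 0 < δ := by
    refine pos_of_mul_pos_right (a := ζ / 2) ?_ (by positivity)
    linarith [hnear₁ p₁ hp₁ hp₁Q]
  have hδn : 10 * ((n : ℝ) + 2) ^ 2 * δ ≤ 1 :=
    (le_div_iff₀' (by positivity)).1 ((min_le_left _ _).trans (min_le_left _ _))
  have hδω : δ ≤ ωf (ζ / 12) := (min_le_left _ _).trans (min_le_right _ _)
  have hδN : 24 * (n : ℝ) ^ 2 * (n + 1) ^ 2 * N * δ ≤ ζ :=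
    (le_div_iff₀' (by positivity)).1 (min_le_right _ _)
  have hδ1 : 2 * δ ≤ 1 - 0 := by
    linarith [show 0 ≤ δ * (10 * (n : ℝ) ^ 2 + 40 * n + 38) by positivity]
  have hΦδ : ζ / 2 * δ ≤ ζ * (1 - 0) / (4 * (n + 1) ^ 2) := by
    have hpos : 0 ≤ ζ * δ * (8 * (n : ℝ) ^ 2 + 36 * n + 38) := by positivity
    rw [le_div_iff₀ (by positivity)]
    linear_combination ζ * hδn + hpos
  have hlt := integral_abs_sub_lt_of_isNearlyBest one_pos hf ⟨hp₁, hp₁Q⟩ ⟨hp₂, hp₂Q⟩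
    (fun q hq ↦ hΦ ▸ hnear₁ q hq.1 hq.2) (fun q hq ↦ hΦ ▸ hnear₂ q hq.1 hq.2) hδ0 hδ1
    (fun x hx y hy hxy ↦ (hωf _ (by positivity) x hx y hy (hxy.trans_le hδω)).le) hζ0 hΦδ
  simp only [sub_zero, one_pow, div_one, mul_one] at hlt
  refine (hlt.trans_le (two_mul_pow_mul_le hn hζ0.le ?_)).trans_eq ?_
  · linear_combination (4 / 3) * hδN + (1 / 12) * hζ0
  · rw [hζ, mul_div_cancel₀ _ (by positivity)]
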